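/- The quartic surface X_Mukai = {f₀ = 0} ⊂ ℙ³(ℂ) is smooth: for every point p ∈ ℂ⁴, if all four partial derivatives ∂f₀/∂x, ∂f₀/∂y, ∂f₀/∂z, ∂f₀/∂t vanish at p, then p = 0. (Hence X_Mukai is a K3 surface.) -/

import Mathlib

open MvPolynomial

/-- Mukai's quartic `f₀ = Σ x⁴ − 6 Σ x²y²` in `ℂ[x,y,z,t]`. -/
noncomputable def f0 : MvPolynomial (Fin 4) ℂ :=
  X 0 ^ 4 + X 1 ^ 4 + X 2 ^ 4 + X 3 ^ 4 -
    6 * (X 0 ^ 2 * X 1 ^ 2 + X 0 ^ 2 * X 2 ^ 2 + X 0 ^ 2 * X 3 ^ 2 +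
         X 1 ^ 2 * X 2 ^ 2 + X 1 ^ 2 * X 3 ^ 2 + X 2 ^ 2 * X 3 ^ 2)

/-!
Write `pₙ` for the `n`-th power sum. Then `f₀ = 4 p₄ - 3 p₂²`, a member of the pencil
`a p₂ₖ + b pₖ²`, whose `j`-th partial derivative is `2k xⱼᵏ⁻¹ (a xⱼᵏ + b pₖ)`. At a critical point,
every `a xⱼᵏ` is therefore either `0` or `-b pₖ`; summing over `j` gives `(a + m b) pₖ = 0`, where
`m` counts the `j` of the second kind. If no `a + m b` vanishes, then `pₖ = 0`, and hence every
`xⱼ = 0`. For `f₀`, the numbers `a + m b = 4 - 3m` are nonzero because `3 ∤ 4`.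
-/

lemma exists_sum_eq_nsmul_of_forall_eq_zero_or_eq {ι M : Type*} [AddCommMonoid M] {s : Finset ι}
    {f : ι → M} {c : M} (hf : ∀ i ∈ s, f i = 0 ∨ f i = c) :
    ∃ m ≤ s.card, ∑ i ∈ s, f i = m • c := by
  classical
  refine ⟨(s.filter (f · ≠ 0)).card, s.card_filter_le _, ?_⟩
  rw [← Finset.sum_filter_ne_zero]
  refine Finset.sum_eq_card_nsmul fun i hi ↦ ?_
  obtain ⟨his, hi0⟩ := Finset.mem_filter.mp hi
  exact (hf i his).resolve_left hi0

section PowerSums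

variable {σ R : Type*} [Fintype σ]

lemma eval_psum [CommSemiring R] (p : σ → R) (n : ℕ) :
    eval p (psum σ R n) = ∑ i, p i ^ n := by
  simp [psum]

lemma pderiv_psum [CommSemiring R] (j : σ) (n : ℕ) :
    pderiv j (psum σ R n) = (n : MvPolynomial σ R) * X j ^ (n - 1) := by
  classical
  simp [psum, pderiv_X, Pi.single_apply]

variable (σ) in
/-- The member `a p₂ₖ + b pₖ²` of the pencil spanned by the power sum `p₂ₖ` and the square of the
power sum `pₖ`, in the variables indexed by `σ`. Mukai's quartic is the case `k = 2`, `a = 4`,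
`b = -3` in four variables. -/
noncomputable def psumPencil [CommSemiring R] (k : ℕ) (a b : R) : MvPolynomial σ R :=
  C a * psum σ R (2 * k) + C b * psum σ R k ^ 2

lemma eval_pderiv_psumPencil [CommSemiring R] (k : ℕ) (a b : R) (p : σ → R) (j : σ) :
    eval p (pderiv j (psumPencil σ k a b)) =
      2 * k * p j ^ (k - 1) * (a * p j ^ k + b * ∑ i, p i ^ k) := by
  rcases k with _ | k
  · simp [psumPencil]
  have exponent_eq : 2 * (k + 1) - 1 = k + (k + 1) := by omega
  simp only [psumPencil, map_add, pderiv_C_mul, pderiv_pow, pderiv_psum, map_mul, map_pow, eval_C,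
    eval_X, eval_psum, map_natCast, exponent_eq, Nat.add_sub_cancel]
  push_cast
  ring

theorem stmt_15_general [CommRing R] [NoZeroDivisors R] {k : ℕ} {a b : R} (hk : (2 * k : R) ≠ 0)
    (hab : ∀ m ≤ Fintype.card σ, a + m * b ≠ 0) (p : σ → R)
    (hp : ∀ j, eval p (pderiv j (psumPencil σ k a b)) = 0) : p = 0 := by
  set S := ∑ i, p i ^ k with hS
  have eq_zero_or (j : σ) : p j = 0 ∨ a * p j ^ k = -(b * S) := by
    have hj := hp j
    rw [eval_pderiv_psumPencil, mul_assoc, mul_eq_zero_iff_left hk, mul_eq_zero] at hj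
    exact hj.imp eq_zero_of_pow_eq_zero eq_neg_of_add_eq_zero_left
  have k_ne_zero : k ≠ 0 := by
    rintro rfl
    simp at hk
  have S_eq_zero : S = 0 := by
    obtain ⟨m, hm, hsum⟩ : ∃ m ≤ Fintype.card σ, ∑ j, a * p j ^ k = m • -(b * S) :=
      exists_sum_eq_nsmul_of_forall_eq_zero_or_eq fun j _ ↦
        (eq_zero_or j).imp_left fun h ↦ by simp [h, k_ne_zero]
    rw [← Finset.mul_sum, ← hS, nsmul_eq_mul] at hsum
    have : (a + m * b) * S = 0 := by linear_combination hsum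
    exact (mul_eq_zero.mp this).resolve_left (hab m hm)
  have a_ne_zero : a ≠ 0 := by simpa using hab 0 (Nat.zero_le _)
  funext j
  refine (eq_zero_or j).elim id fun hj ↦ ?_
  rw [S_eq_zero, mul_zero, neg_zero] at hj
  exact eq_zero_of_pow_eq_zero ((mul_eq_zero.mp hj).resolve_left a_ne_zero)

end PowerSums

lemma f0_eq_psumPencil : f0 = psumPencil (Fin 4) 2 4 (-3) := by
  simp only [f0, psumPencil, psum, Fin.sum_univ_four, map_neg, map_ofNat]
  ring

lemma four_add_natCast_mul_neg_three_ne_zero {R : Type*} [Ring R] [CharZero R] (m : ℕ) :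
    (4 + m * (-3) : R) ≠ 0 := by
  have : (4 + m * (-3) : ℤ) ≠ 0 := by omega
  exact_mod_cast this

/-- The quartic surface `X_Mukai = {f₀ = 0} ⊂ ℙ³(ℂ)` is smooth: if all four
partial derivatives of `f₀` vanish at `p ∈ ℂ⁴`, then `p = 0`. -/
theorem stmt_15 :
    ∀ p : Fin 4 → ℂ, (∀ j : Fin 4, eval p (pderiv j f0) = 0) → p = 0 := by
  rw [f0_eq_psumPencil]
  exact stmt_15_general (by norm_num) fun m _ ↦ four_add_natCast_mul_neg_three_ne_zero m
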